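/- For all integers v, k, t with 0 ≤ t ≤ k ≤ v, if a (v,k,t) Steiner system exists (a family of k-subsets of a v-set covering every t-subset exactly once), then it is an optimal covering: C(v,k,t) = binom(v,t)/binom(k,t), and this value equals the Schönheim bound L(v,k,t). -/

import Mathlib

/-!
Double counting incident pairs `(s, b)`, with `s` a `t`-set and `b` a block containing it, bounds
the size of every covering from below by `binom(v,t)/binom(k,t)`; a Steiner system attains this
bound because each `t`-set is counted exactly once.

For the Schönheim bound, the blocks through a point `x`, with `x` removed, form a
`(v-1,k-1,t-1)` Steiner system. By induction it has `L(v-1,k-1,t-1)` blocks, whatever `x` is, so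
double counting incident pairs (point, block) shows that the number of blocks is exactly
`(v/k)·L(v-1,k-1,t-1)`: the ceilings in `L(v,k,t)` are applied to integers.
-/

/-- A `(v,k,t)` covering design: a family of `k`-element subsets (blocks) of a
`v`-element set such that every `t`-element subset is contained in at least one block. -/
def IsCoverDesign (v k t : ℕ) (B : Finset (Finset (Fin v))) : Prop :=
  (∀ b ∈ B, b.card = k) ∧
  ∀ s : Finset (Fin v), s.card = t → ∃ b ∈ B, s ⊆ b

/-- `coverNumber v k t` is `C(v,k,t)`, the minimum number of blocks in a
`(v,k,t)` covering design. -/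
noncomputable def coverNumber (v k t : ℕ) : ℕ :=
  sInf {n : ℕ | ∃ B : Finset (Finset (Fin v)), IsCoverDesign v k t B ∧ B.card = n}

/-- The iterated-ceiling Schönheim bound
`L(v,k,t) = ⌈(v/k)·⌈((v−1)/(k−1))·⋯·⌈(v−t+1)/(k−t+1)⌉⋯⌉⌉`, with `L(v,k,0) = 1`. -/
noncomputable def schonheimL : ℕ → ℕ → ℕ → ℕ
  | _, _, 0 => 1
  | v, k, t + 1 => ⌈((v : ℚ) / (k : ℚ)) * (schonheimL (v - 1) (k - 1) t : ℚ)⌉₊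

section

open Finset

variable {α : Type*} {X : Finset α} {B : Finset (Finset α)} {v k t n : ℕ}

/-- A Steiner system with block size `k` and strength `t` on the point set `X`. The points form a
finset, not a type, so that removing a point does not change the ambient type. -/
structure IsSteinerSystem (X : Finset α) (k t : ℕ) (B : Finset (Finset α)) : Prop where
  subset_ground : ∀ b ∈ B, b ⊆ X
  card_block : ∀ b ∈ B, #b = k
  existsUnique_block : ∀ s ⊆ X, #s = t → ∃! b, b ∈ B ∧ s ⊆ b

theorem filter_powersetCard_subset_right [DecidableEq α] {b : Finset α} (hb : b ⊆ X) (t : ℕ) :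
    {s ∈ X.powersetCard t | s ⊆ b} = b.powersetCard t := by
  ext s
  simp only [mem_filter, mem_powersetCard]
  exact ⟨fun ⟨⟨_, hs⟩, hsb⟩ ↦ ⟨hsb, hs⟩, fun ⟨hsb, hs⟩ ↦ ⟨⟨hsb.trans hb, hs⟩, hsb⟩⟩

theorem card_bipartiteBelow_subset [DecidableEq α] {b : Finset α} (hb : b ⊆ X) (t : ℕ) :
    #((X.powersetCard t).bipartiteBelow (· ⊆ ·) b) = (#b).choose t := by
  rw [bipartiteBelow, filter_powersetCard_subset_right hb, card_powersetCard]

theorem card_mul_eq_card_mul_of_card_memberSubfamily [DecidableEq α] (hX : ∀ b ∈ B, b ⊆ X)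
    (hk : ∀ b ∈ B, #b = k) (hn : ∀ x ∈ X, #(B.memberSubfamily x) = n) : #X * n = #B * k := by
  refine card_mul_eq_card_mul (· ∈ ·) (fun x hx ↦ ?_) fun b hb ↦ ?_
  · rw [← hn x hx, memberSubfamily, bipartiteAbove]
    exact (card_image_of_injOn ((erase_injOn' x).mono fun b hb ↦ (mem_filter.1 hb).2)).symm
  · rw [bipartiteBelow, filter_mem_eq_inter, inter_eq_right.2 (hX b hb), hk b hb]

namespace IsCoverDesign

variable {B : Finset (Finset (Fin v))}

theorem choose_le_card_mul_choose (hB : IsCoverDesign v k t B) :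
    v.choose t ≤ #B * k.choose t := by
  have covered : ∀ s ∈ (univ : Finset (Fin v)).powersetCard t,
      1 ≤ #(B.bipartiteAbove (· ⊆ ·) s) := fun s hs ↦ by
    obtain ⟨b, hb, hsb⟩ := hB.2 s (mem_powersetCard.1 hs).2
    exact card_pos.2 ⟨b, (mem_bipartiteAbove _).2 ⟨hb, hsb⟩⟩
  have covers : ∀ b ∈ B,
      #(((univ : Finset (Fin v)).powersetCard t).bipartiteBelow (· ⊆ ·) b) ≤ k.choose t :=
    fun b hb ↦ by rw [card_bipartiteBelow_subset (subset_univ b), hB.1 b hb]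
  simpa using card_mul_le_card_mul _ covered covers

theorem coverNumber_le_card (hB : IsCoverDesign v k t B) : coverNumber v k t ≤ #B :=
  Nat.sInf_le ⟨B, hB, rfl⟩

theorem le_coverNumber (hB : IsCoverDesign v k t B)
    (hn : ∀ A, IsCoverDesign v k t A → n ≤ #A) : n ≤ coverNumber v k t :=
  le_csInf ⟨#B, B, hB, rfl⟩ fun _ ⟨A, hA, hcard⟩ ↦ hcard ▸ hn A hA

end IsCoverDesign

theorem schonheimL_succ_eq_of_mul_eq (hk : k ≠ 0)
    (h : v * schonheimL (v - 1) (k - 1) t = n * k) : schonheimL v k (t + 1) = n := by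
  have hk' : (k : ℚ) ≠ 0 := Nat.cast_ne_zero.2 hk
  have ratio : (v : ℚ) / k * schonheimL (v - 1) (k - 1) t = n := by
    rw [div_mul_eq_mul_div, div_eq_iff hk']
    exact_mod_cast h
  rw [schonheimL, ratio, Nat.ceil_natCast]

namespace IsSteinerSystem

theorem card_bipartiteAbove_subset [DecidableEq α] (hB : IsSteinerSystem X k t B) {s : Finset α}
    (hsX : s ⊆ X) (hs : #s = t) : #(B.bipartiteAbove (· ⊆ ·) s) = 1 := by
  simpa only [card_eq_one_iff_existsUnique, mem_bipartiteAbove]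
    using hB.existsUnique_block s hsX hs

theorem choose_eq_card_mul_choose (hB : IsSteinerSystem X k t B) :
    (#X).choose t = #B * k.choose t := by
  classical
  have covered : ∀ s ∈ X.powersetCard t, #(B.bipartiteAbove (· ⊆ ·) s) = 1 := fun s hs ↦
    hB.card_bipartiteAbove_subset (mem_powersetCard.1 hs).1 (mem_powersetCard.1 hs).2
  have covers : ∀ b ∈ B, #((X.powersetCard t).bipartiteBelow (· ⊆ ·) b) = k.choose t :=
    fun b hb ↦ by rw [card_bipartiteBelow_subset (hB.subset_ground b hb), hB.card_block b hb]
  simpa using card_mul_eq_card_mul _ covered covers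

theorem memberSubfamily [DecidableEq α] (hB : IsSteinerSystem X (k + 1) (t + 1) B) {x : α}
    (hx : x ∈ X) : IsSteinerSystem (X.erase x) k t (B.memberSubfamily x) where
  subset_ground b hb := by
    obtain ⟨hb, hxb⟩ := mem_memberSubfamily.1 hb
    exact subset_erase.2 ⟨(subset_insert x b).trans (hB.subset_ground _ hb), hxb⟩
  card_block b hb := by
    obtain ⟨hb, hxb⟩ := mem_memberSubfamily.1 hb
    simpa [card_insert_of_notMem hxb] using hB.card_block _ hb
  existsUnique_block s hsX hs := by
    obtain ⟨hsX, hxs⟩ := subset_erase.1 hsX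
    obtain ⟨b, ⟨hb, hsb⟩, hunique⟩ := hB.existsUnique_block (insert x s)
      (insert_subset hx hsX) (by rw [card_insert_of_notMem hxs, hs])
    obtain ⟨hxb, hsb⟩ := insert_subset_iff.1 hsb
    refine ⟨b.erase x, ⟨mem_memberSubfamily.2 ⟨?_, notMem_erase x b⟩, ?_⟩, ?_⟩
    · rwa [insert_erase hxb]
    · exact subset_erase.2 ⟨hsb, hxs⟩
    · rintro c ⟨hc, hsc⟩
      obtain ⟨hc, hxc⟩ := mem_memberSubfamily.1 hc
      rw [← hunique (insert x c) ⟨hc, insert_subset_insert x hsc⟩, erase_insert hxc]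

theorem card_eq_schonheimL (hB : IsSteinerSystem X k t B) (htk : t ≤ k) :
    #B = schonheimL #X k t := by
  classical
  induction t generalizing X k B with
  | zero => simpa [schonheimL] using hB.choose_eq_card_mul_choose.symm
  | succ t ih =>
    obtain ⟨k, rfl⟩ := Nat.exists_eq_add_of_le' (Nat.one_le_of_lt htk)
    have degree : ∀ x ∈ X, #(B.memberSubfamily x) = schonheimL (#X - 1) k t := fun x hx ↦ by
      rw [ih (hB.memberSubfamily hx) (Nat.le_of_succ_le_succ htk), card_erase_of_mem hx]
    exact (schonheimL_succ_eq_of_mul_eq k.succ_ne_zero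
      (card_mul_eq_card_mul_of_card_memberSubfamily hB.subset_ground hB.card_block degree)).symm

variable {B : Finset (Finset (Fin v))}

theorem isCoverDesign (hB : IsSteinerSystem univ k t B) : IsCoverDesign v k t B :=
  ⟨hB.card_block, fun s hs ↦ (hB.existsUnique_block s (subset_univ s) hs).exists⟩

theorem coverNumber_eq_card (hB : IsSteinerSystem univ k t B) (htk : t ≤ k) :
    coverNumber v k t = #B := by
  refine le_antisymm hB.isCoverDesign.coverNumber_le_card
    (hB.isCoverDesign.le_coverNumber fun A hA ↦ ?_)
  have count : #B * k.choose t ≤ #A * k.choose t := by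
    simpa [← hB.choose_eq_card_mul_choose] using hA.choose_le_card_mul_choose
  exact Nat.le_of_mul_le_mul_right count (Nat.choose_pos htk)

end IsSteinerSystem

end

/-- If a `(v,k,t)` Steiner system exists (a family of `k`-subsets of a `v`-set
covering every `t`-subset exactly once), then it is an optimal covering:
`C(v,k,t) = binom(v,t)/binom(k,t)`, and this value equals the Schönheim bound
`L(v,k,t)`. -/
theorem steiner_system_optimal (v k t : ℕ) (htk : t ≤ k) (hkv : k ≤ v)
    (B : Finset (Finset (Fin v))) (hblocks : ∀ b ∈ B, b.card = k)
    (hsteiner : ∀ s : Finset (Fin v), s.card = t → ∃! b, b ∈ B ∧ s ⊆ b) :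
    coverNumber v k t = Nat.choose v t / Nat.choose k t ∧
    coverNumber v k t = schonheimL v k t := by
  have hB : IsSteinerSystem Finset.univ k t B :=
    ⟨fun b _ ↦ Finset.subset_univ b, hblocks, fun s _ ↦ hsteiner s⟩
  have hcover : coverNumber v k t = B.card := hB.coverNumber_eq_card htk
  have hcount : v.choose t = B.card * k.choose t := by
    simpa using hB.choose_eq_card_mul_choose
  have hschonheim : B.card = schonheimL v k t := by
    simpa using hB.card_eq_schonheimL htk
  refine ⟨?_, hcover.trans hschonheim⟩
  rw [hcover, hcount, Nat.mul_div_cancel _ (Nat.choose_pos htk)]
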